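/- Let d ≥ 1 and let μ, ν be Borel probability measures on ℝ^d with finite first moments which are equivalent to the d-dimensional Lebesgue measure (i.e. μ, ν and Lebesgue measure are mutually absolutely continuous). Then the infimum over all convex 1-Lipschitz functions f : ℝ^d → ℝ of (∫ f dν − ∫ f dμ) equals the infimum over all Borel probability measures ρ on ℝ^d with support contained in the closed unit ball of (C(ν,ρ) − C(μ,ρ)). -/

import Mathlib

open MeasureTheory Metric RealInnerProductSpace

noncomputable section

/-- The set of couplings of two measures on `ℝ^d`. -/
def Couplings {d : ℕ} (α β : Measure (EuclideanSpace ℝ (Fin d))) :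
    Set (Measure (EuclideanSpace ℝ (Fin d) × EuclideanSpace ℝ (Fin d))) :=
  {π | π.map Prod.fst = α ∧ π.map Prod.snd = β}

/-- `C(α,β) = sup_{π ∈ Π(α,β)} ∫ ⟨x,y⟩ dπ`. -/
def OTcost {d : ℕ} (α β : Measure (EuclideanSpace ℝ (Fin d))) : ℝ :=
  sSup {r : ℝ | ∃ π ∈ Couplings α β, r = ∫ p, ⟪p.1, p.2⟫ ∂π}

/-!
Both inequalities are Kantorovich duality up to `ε`. Given `f`, choose measurably an
`ε`-subgradient `G x` of `f` at every `x`; since `f` is 1-Lipschitz, `ρ = G_* μ` lives in the unit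
ball, `(f, f^*)` is an admissible dual pair for `(ν, ρ)`, and it is `ε`-optimal for `(μ, ρ)` because
Young's inequality is nearly an equality along the graph of `G`.

Given `ρ`, we need an almost optimal dual pair for `(ν, ρ)` whose first potential is convex and
1-Lipschitz. Quantize `ρ` to finitely many atoms `zᵢ` of the ball and regularize the transport
problem by an entropy of weight `δ`: the dual becomes the minimization of a smooth function of
finitely many variables, coercive modulo constants, and criticality of its minimizer `ψ` says
exactly that the Gibbs weights define a coupling. The first potential
`x ↦ δ log ∑ᵢ exp (⟨x, zᵢ⟩ / δ - ψᵢ)` is a smooth maximum of affine functions with slopes in the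
ball, and the entropy costs only a constant times `δ`.
-/

theorem csInf_le_csInf_of_forall_exists_le_add {s t : Set ℝ} (hs : BddBelow s) (ht : t.Nonempty)
    (h : ∀ b ∈ t, ∀ ε > 0, ∃ a ∈ s, a ≤ b + ε) : sInf s ≤ sInf t := by
  refine le_csInf ht fun b hb ↦ le_of_forall_pos_le_add fun ε hε ↦ ?_
  obtain ⟨a, has, hab⟩ := h b hb ε hε
  exact (csInf_le hs has).trans hab

section LogSumExp

variable {ι : Type*} [Fintype ι]

/-- The smooth maximum `log ∑ᵢ exp vᵢ` of finitely many reals; it regularizes the maximum of the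
affine functions dual to a finitely supported measure. -/
def logSumExp (v : ι → ℝ) : ℝ := Real.log (∑ i, Real.exp (v i))

/-- The Gibbs weights `exp vᵢ / ∑ⱼ exp vⱼ`, which form the gradient of `logSumExp` at `v`. -/
def softmax (v : ι → ℝ) (i : ι) : ℝ := Real.exp (v i - logSumExp v)

theorem softmax_pos (v : ι → ℝ) (i : ι) : 0 < softmax v i := Real.exp_pos _

theorem log_softmax (v : ι → ℝ) (i : ι) : Real.log (softmax v i) = v i - logSumExp v :=
  Real.log_exp _

variable [Nonempty ι]

theorem exp_logSumExp (v : ι → ℝ) : Real.exp (logSumExp v) = ∑ i, Real.exp (v i) :=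
  Real.exp_log (Finset.sum_pos (fun _ _ ↦ Real.exp_pos _) Finset.univ_nonempty)

theorem softmax_eq_div (v : ι → ℝ) (i : ι) :
    softmax v i = Real.exp (v i) / ∑ j, Real.exp (v j) := by
  rw [softmax, Real.exp_sub, exp_logSumExp]

theorem sum_softmax (v : ι → ℝ) : ∑ i, softmax v i = 1 := by
  simp_rw [softmax, Real.exp_sub, ← Finset.sum_div, ← exp_logSumExp]
  exact div_self (Real.exp_pos _).ne'

theorem softmax_le_one (v : ι → ℝ) (i : ι) : softmax v i ≤ 1 :=
  (Finset.single_le_sum (fun j _ ↦ (softmax_pos v j).le) (Finset.mem_univ i)).trans_eq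
    (sum_softmax v)

theorem le_logSumExp (v : ι → ℝ) (i : ι) : v i ≤ logSumExp v :=
  sub_nonpos.1 (Real.exp_le_one_iff.1 (softmax_le_one v i))

theorem logSumExp_le_iff {v : ι → ℝ} {c : ℝ} :
    logSumExp v ≤ c ↔ ∑ i, Real.exp (v i - c) ≤ 1 := by
  simp_rw [Real.exp_sub, ← Finset.sum_div]
  rw [div_le_one (Real.exp_pos c), ← exp_logSumExp, Real.exp_le_exp]

theorem logSumExp_le_add {u v : ι → ℝ} {c : ℝ} (h : ∀ i, u i ≤ v i + c) :
    logSumExp u ≤ logSumExp v + c := by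
  rw [logSumExp_le_iff, ← sum_softmax v]
  exact Finset.sum_le_sum fun i _ ↦ Real.exp_le_exp.2 (by linarith [h i])

theorem logSumExp_sub_const (v : ι → ℝ) (c : ℝ) :
    logSumExp (fun i ↦ v i - c) = logSumExp v - c :=
  le_antisymm (logSumExp_le_add fun _ ↦ (sub_eq_add_neg _ _).le) <|
    sub_le_iff_le_add.2 <| logSumExp_le_add fun _ ↦ (sub_add_cancel _ _).ge

theorem lipschitzWith_logSumExp : LipschitzWith 1 (logSumExp : (ι → ℝ) → ℝ) :=
  LipschitzWith.of_le_add fun u v ↦ logSumExp_le_add fun i ↦ by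
    linarith [le_abs_self (u i - v i), Real.dist_eq (u i) (v i), dist_le_pi_dist u v i]

theorem convexOn_logSumExp : ConvexOn ℝ Set.univ (logSumExp : (ι → ℝ) → ℝ) := by
  refine ⟨convex_univ, fun u _ v _ s t hs ht hst ↦ logSumExp_le_iff.2 ?_⟩
  calc ∑ i, Real.exp ((s • u + t • v) i - (s • logSumExp u + t • logSumExp v))
      = ∑ i, Real.exp (s • (u i - logSumExp u) + t • (v i - logSumExp v)) :=
        Finset.sum_congr rfl fun i _ ↦ by
          simp only [Pi.add_apply, Pi.smul_apply, smul_eq_mul]; ring_nf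
    _ ≤ ∑ i, (s • softmax u i + t • softmax v i) :=
        Finset.sum_le_sum fun i _ ↦ convexOn_exp.2 trivial trivial hs ht hst
    _ = 1 := by
        rw [Finset.sum_add_distrib, ← Finset.smul_sum, ← Finset.smul_sum, sum_softmax, sum_softmax,
          smul_eq_mul, smul_eq_mul, mul_one, mul_one, hst]

theorem continuous_softmax (i : ι) : Continuous fun v : ι → ℝ ↦ softmax v i :=
  Real.continuous_exp.comp <| (continuous_apply i).sub lipschitzWith_logSumExp.continuous

theorem measurable_softmax_comp {X : Type*} [MeasurableSpace X] {u : X → ι → ℝ}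
    (hu : Measurable u) (i : ι) : Measurable fun x ↦ softmax (u x) i :=
  (continuous_softmax i).measurable.comp hu

theorem hasDerivAt_logSumExp_comp {u : ℝ → ι → ℝ} {u' : ι → ℝ} {t : ℝ} (hu : HasDerivAt u u' t) :
    HasDerivAt (fun s ↦ logSumExp (u s)) (∑ i, softmax (u t) i * u' i) t := by
  have hsum : HasDerivAt (fun s ↦ ∑ i, Real.exp (u s i)) (∑ i, Real.exp (u t i) * u' i) t :=
    HasDerivAt.fun_sum fun i _ ↦ (hasDerivAt_pi.1 hu i).exp
  have hne : ∑ i, Real.exp (u t i) ≠ 0 := exp_logSumExp (u t) ▸ (Real.exp_pos _).ne'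
  refine (hsum.log hne).congr_deriv ?_
  simp_rw [softmax_eq_div, Finset.sum_div, div_mul_eq_mul_div]

end LogSumExp

theorem integrable_comp_of_lipschitzWith {X F : Type*} [MeasurableSpace X]
    [NormedAddCommGroup F] {α : Measure X} [IsFiniteMeasure α] {K : NNReal} {g : F → ℝ}
    (hg : LipschitzWith K g) {u : X → F} (hu : Integrable u α) :
    Integrable (fun x ↦ g (u x)) α := by
  refine Integrable.mono' (g := fun x ↦ |g 0| + K * ‖u x‖)
    ((integrable_const _).add (hu.norm.const_mul _)) (hg.continuous.comp_aestronglyMeasurable hu.1)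
    (ae_of_all _ fun x ↦ ?_)
  have := hg.dist_le_mul (u x) 0
  rw [dist_zero_right, Real.dist_eq] at this
  rw [Real.norm_eq_abs]
  linarith [abs_sub_abs_le_abs_sub (g (u x)) (g 0)]

theorem exists_forall_le_of_add_const_invariant {ι : Type*} [Fintype ι] [Nonempty ι]
    {F : (ι → ℝ) → ℝ} (hcont : Continuous F) (hinv : ∀ ψ c, F (fun i ↦ ψ i - c) = F ψ)
    {a : ι → ℝ} (ha : ∀ i, 0 < a i) {M : ℝ}
    (hgrowth : ∀ ψ i, ∑ k, a k * ψ k - ψ i ≤ F ψ + M) : ∃ ψ, ∀ φ, F ψ ≤ F φ := by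
  let box : Set (ι → ℝ) := Set.Icc 0 fun i ↦ (F 0 + M) / a i
  have hzero : (0 : ι → ℝ) ∈ box := by
    refine Set.left_mem_Icc.2 fun i ↦ div_nonneg ?_ (ha i).le
    simpa using hgrowth 0 i
  obtain ⟨ψ, -, hψ⟩ := isCompact_Icc.exists_isMinOn ⟨0, hzero⟩ hcont.continuousOn
  refine ⟨ψ, fun φ ↦ ?_⟩
  obtain ⟨i, hi⟩ := Finite.exists_min φ
  rw [← hinv φ (φ i)]
  set φ' : ι → ℝ := fun k ↦ φ k - φ i
  have hφ' : 0 ≤ φ' := fun k ↦ sub_nonneg.2 (hi k)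
  by_cases hmem : φ' ∈ box
  · exact hψ hmem
  have hlt : F 0 < F φ' := by
    by_contra! hle
    refine hmem ⟨hφ', fun k ↦ (le_div_iff₀' (ha k)).2 ?_⟩
    calc a k * φ' k ≤ ∑ j, a j * φ' j :=
          Finset.single_le_sum (fun j _ ↦ mul_nonneg (ha j).le (hφ' j)) (Finset.mem_univ k)
      _ = ∑ j, a j * φ' j - φ' i := by simp [φ']
      _ ≤ F φ' + M := hgrowth φ' i
      _ ≤ F 0 + M := by gcongr
  exact (hψ hzero).trans hlt.le

section EntropicDual

variable {ι X : Type*} [Fintype ι] [MeasurableSpace X]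

/-- The dual functional of entropy-regularized transport from `α` to a finitely supported measure
with weights `a`, as a function of the potential `ψ` on the atoms; `v x i` is the gain of sending
`x` to the atom `i`. -/
def entropicDual (α : Measure X) (v : X → ι → ℝ) (a ψ : ι → ℝ) : ℝ :=
  ∫ x, logSumExp (v x - ψ) ∂α + ∑ i, a i * ψ i

variable [Nonempty ι] {α : Measure X} [IsProbabilityMeasure α] {v : X → ι → ℝ} {a : ι → ℝ}

theorem integrable_logSumExp_sub (hv : Integrable v α) (ψ : ι → ℝ) :
    Integrable (fun x ↦ logSumExp (v x - ψ)) α :=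
  integrable_comp_of_lipschitzWith lipschitzWith_logSumExp (hv.sub (integrable_const ψ))

theorem continuous_entropicDual (hv : Integrable v α) : Continuous (entropicDual α v a) := by
  refine Continuous.add (LipschitzWith.of_le_add fun ψ φ ↦ ?_).continuous (by fun_prop)
  calc ∫ x, logSumExp (v x - ψ) ∂α ≤ ∫ x, (logSumExp (v x - φ) + dist ψ φ) ∂α := by
        refine integral_mono (integrable_logSumExp_sub hv ψ)
          ((integrable_logSumExp_sub hv φ).add (integrable_const _)) fun x ↦ ?_
        simpa only [NNReal.coe_one, one_mul, dist_sub_left] using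
          lipschitzWith_logSumExp.le_add_mul (v x - ψ) (v x - φ)
    _ = ∫ x, logSumExp (v x - φ) ∂α + dist ψ φ := by
        rw [integral_add (integrable_logSumExp_sub hv φ) (integrable_const _)]; simp

theorem entropicDual_sub_const (hv : Integrable v α) (ha : ∑ i, a i = 1) (ψ : ι → ℝ) (c : ℝ) :
    entropicDual α v a (fun i ↦ ψ i - c) = entropicDual α v a ψ := by
  have hshift (x : X) : logSumExp (v x - fun i ↦ ψ i - c) = logSumExp (v x - ψ) + c := by
    rw [← sub_neg_eq_add, ← logSumExp_sub_const]
    congr 1 with i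
    simp only [Pi.sub_apply]
    ring
  simp only [entropicDual, hshift, mul_sub, Finset.sum_sub_distrib, ← Finset.sum_mul, ha,
    integral_add (integrable_logSumExp_sub hv ψ) (integrable_const c), integral_const,
    probReal_univ, smul_eq_mul]
  ring

theorem sum_sub_le_entropicDual_add (hv : Integrable v α) (ψ : ι → ℝ) (i : ι) :
    ∑ k, a k * ψ k - ψ i ≤ entropicDual α v a ψ + ∑ j, |∫ x, v x j ∂α| := by
  have hle : ∫ x, (v x i - ψ i) ∂α ≤ ∫ x, logSumExp (v x - ψ) ∂α :=
    integral_mono ((hv.eval i).sub (integrable_const _)) (integrable_logSumExp_sub hv ψ)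
      fun x ↦ le_logSumExp (v x - ψ) i
  rw [integral_sub (hv.eval i) (integrable_const _), integral_const, probReal_univ,
    one_smul] at hle
  have habs := Finset.single_le_sum (f := fun j ↦ |∫ x, v x j ∂α|) (fun _ _ ↦ abs_nonneg _)
    (Finset.mem_univ i)
  rw [entropicDual]
  linarith [neg_abs_le (∫ x, v x i ∂α)]

theorem hasDerivAt_entropicDual_line (hv : Integrable v α) (ψ e : ι → ℝ) :
    HasDerivAt (fun t : ℝ ↦ entropicDual α v a (ψ + t • e))
      (∫ x, ∑ i, softmax (v x - ψ) i * -e i ∂α + ∑ i, a i * e i) 0 := by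
  have hpath (x : X) (t : ℝ) : HasDerivAt (fun t ↦ v x - (ψ + t • e)) (-e) t := by
    simpa using (((hasDerivAt_id t).smul_const e).const_add ψ).const_sub (v x)
  have hbound (x : X) (t : ℝ) :
      ‖∑ i, softmax (v x - (ψ + t • e)) i * -e i‖ ≤ ∑ i, |e i| := by
    refine (norm_sum_le _ _).trans (Finset.sum_le_sum fun i _ ↦ ?_)
    rw [Real.norm_eq_abs, abs_mul, abs_neg, abs_of_pos (softmax_pos _ _)]
    exact mul_le_of_le_one_left (abs_nonneg _) (softmax_le_one _ _)
  have hmeas : AEStronglyMeasurable (fun x ↦ ∑ i, softmax (v x - (ψ + (0 : ℝ) • e)) i * -e i) α :=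
    (continuous_finsetSum _ fun i _ ↦ (continuous_softmax i).mul_const _).comp_aestronglyMeasurable
      (hv.1.sub aestronglyMeasurable_const)
  have hintegral := (hasDerivAt_integral_of_dominated_loc_of_deriv_le (μ := α) Filter.univ_mem
    (Filter.Eventually.of_forall fun t ↦ (integrable_logSumExp_sub hv (ψ + t • e)).1)
    (integrable_logSumExp_sub hv _) hmeas (ae_of_all _ fun x t _ ↦ hbound x t)
    (integrable_const _) (ae_of_all _ fun x t _ ↦ hasDerivAt_logSumExp_comp (hpath x t))).2
  have hlinear : HasDerivAt (fun t : ℝ ↦ ∑ i, a i * (ψ + t • e) i) (∑ i, a i * e i) 0 :=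
    HasDerivAt.fun_sum fun i _ ↦ by
      simpa using (((hasDerivAt_id (0 : ℝ)).mul_const (e i)).const_add (ψ i)).const_mul (a i)
  refine (hintegral.add hlinear).congr_deriv ?_
  simp only [zero_smul, add_zero]

theorem exists_integral_softmax_sub_eq (hv : Integrable v α) (ha : ∀ i, 0 < a i)
    (hsum : ∑ i, a i = 1) : ∃ ψ : ι → ℝ, ∀ i, ∫ x, softmax (v x - ψ) i ∂α = a i := by
  classical
  obtain ⟨ψ, hψ⟩ := exists_forall_le_of_add_const_invariant (continuous_entropicDual hv)
    (entropicDual_sub_const hv hsum) ha (sum_sub_le_entropicDual_add hv)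
  refine ⟨ψ, fun i ↦ ?_⟩
  have hmin : IsLocalMin (fun t : ℝ ↦ entropicDual α v a (ψ + t • Pi.single i 1)) 0 :=
    Filter.Eventually.of_forall fun t ↦ by simpa using hψ (ψ + t • Pi.single i 1)
  have hcrit := hmin.hasDerivAt_eq_zero (hasDerivAt_entropicDual_line hv ψ (Pi.single i 1))
  simp only [Pi.single_apply, mul_neg, mul_ite, mul_one, mul_zero, Finset.sum_neg_distrib,
    Finset.sum_ite_eq', Finset.mem_univ, if_true, integral_neg] at hcrit
  linarith

end EntropicDual

theorem fst_withDensity_prod {X Y : Type*} [MeasurableSpace X] [MeasurableSpace Y]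
    {α : Measure X} {β : Measure Y} [SFinite α] [SFinite β] {h : X × Y → ENNReal}
    (hh : Measurable h) :
    ((α.prod β).withDensity h).map Prod.fst = α.withDensity fun x ↦ ∫⁻ y, h (x, y) ∂β := by
  ext s hs
  rw [Measure.map_apply measurable_fst hs, withDensity_apply _ (measurable_fst hs),
    withDensity_apply _ hs, ← Set.prod_univ, ← Measure.prod_restrict, Measure.restrict_univ,
    lintegral_prod _ hh.aemeasurable]

theorem snd_withDensity_prod {X Y : Type*} [MeasurableSpace X] [MeasurableSpace Y]
    {α : Measure X} {β : Measure Y} [SFinite α] [SFinite β] {h : X × Y → ENNReal}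
    (hh : Measurable h) :
    ((α.prod β).withDensity h).map Prod.snd = β.withDensity fun y ↦ ∫⁻ x, h (x, y) ∂α := by
  ext s hs
  rw [Measure.map_apply measurable_snd hs, withDensity_apply _ (measurable_snd hs),
    withDensity_apply _ hs, ← Set.univ_prod, ← Measure.prod_restrict, Measure.restrict_univ,
    lintegral_prod_symm _ hh.aemeasurable]

section GibbsCoupling

variable {ι X Y : Type*} [Fintype ι] [MeasurableSpace Y]

/-- The density, relative to `α ⊗ β`, of the coupling that sends `x` to the cell `T ⁻¹' {i}` with
probability `softmax (u x) i` and is distributed like `β` inside each cell. It vanishes on cells of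
mass zero, where the division returns `0`. -/
def gibbsDensity (β : Measure Y) (u : X → ι → ℝ) (T : Y → ι) (p : X × Y) : ℝ :=
  softmax (u p.1) (T p.2) / β.real (T ⁻¹' {T p.2})

variable [Nonempty ι] {β : Measure Y} {u : X → ι → ℝ} {T : Y → ι}

theorem lintegral_gibbsDensity_snd [MeasurableSpace ι] [MeasurableSingletonClass ι]
    [IsFiniteMeasure β] (hT : Measurable T) (hβ : ∀ i, β.real (T ⁻¹' {i}) ≠ 0) (x : X) :
    ∫⁻ y, ENNReal.ofReal (gibbsDensity β u T (x, y)) ∂β = 1 := by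
  calc ∫⁻ y, ENNReal.ofReal (gibbsDensity β u T (x, y)) ∂β
      = ∫⁻ i, ENNReal.ofReal (softmax (u x) i / β.real (T ⁻¹' {i})) ∂(β.map T) :=
        (lintegral_map (f := fun i ↦ ENNReal.ofReal (softmax (u x) i / β.real (T ⁻¹' {i})))
          (measurable_of_finite _) hT).symm
    _ = ∑ i, ENNReal.ofReal (softmax (u x) i) := by
        rw [lintegral_fintype]
        refine Finset.sum_congr rfl fun i _ ↦ ?_
        rw [Measure.map_apply hT (measurableSet_singleton i), ← ofReal_measureReal,
          ← ENNReal.ofReal_mul' measureReal_nonneg, div_mul_cancel₀ _ (hβ i)]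
    _ = 1 := by
        rw [← ENNReal.ofReal_sum_of_nonneg fun i _ ↦ (softmax_pos _ i).le, sum_softmax,
          ENNReal.ofReal_one]

variable [MeasurableSpace X] {α : Measure X}

theorem lintegral_gibbsDensity_fst [IsProbabilityMeasure α] (hu : Measurable u)
    (hβ : ∀ i, β.real (T ⁻¹' {i}) ≠ 0)
    (hbal : ∀ i, ∫ x, softmax (u x) i ∂α = β.real (T ⁻¹' {i})) (y : Y) :
    ∫⁻ x, ENNReal.ofReal (gibbsDensity β u T (x, y)) ∂α = 1 := by
  have hint : Integrable (fun x ↦ softmax (u x) (T y)) α :=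
    .of_bound (measurable_softmax_comp hu _).aestronglyMeasurable 1 <| ae_of_all _ fun x ↦ by
      simpa only [Real.norm_of_nonneg (softmax_pos _ _).le] using softmax_le_one (u x) (T y)
  simp only [gibbsDensity]
  rw [← ofReal_integral_eq_lintegral_ofReal (hint.div_const _)
    (ae_of_all _ fun x ↦ div_nonneg (softmax_pos _ _).le measureReal_nonneg), integral_div,
    hbal, div_self (hβ _), ENNReal.ofReal_one]

/-- The measure with density `gibbsDensity β u T` relative to `α ⊗ β`; it is a coupling of `α` and
`β` once the potentials `u` give each cell of `T` its `β`-mass. -/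
def gibbsCoupling (α : Measure X) (β : Measure Y) (u : X → ι → ℝ) (T : Y → ι) :
    Measure (X × Y) :=
  (α.prod β).withDensity fun p ↦ ENNReal.ofReal (gibbsDensity β u T p)

variable [MeasurableSpace ι] [MeasurableSingletonClass ι]

theorem measurable_gibbsDensity (hu : Measurable u) (hT : Measurable T) :
    Measurable (gibbsDensity β u T) := by
  have hcell : Measurable fun q : X × ι ↦ softmax (u q.1) q.2 / β.real (T ⁻¹' {q.2}) :=
    measurable_from_prod_countable_left fun i ↦
      (measurable_softmax_comp hu i).div_const (β.real (T ⁻¹' {i}))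
  exact hcell.comp (measurable_fst.prodMk (hT.comp measurable_snd))

variable [IsProbabilityMeasure α] [IsProbabilityMeasure β]

theorem map_fst_gibbsCoupling (hu : Measurable u) (hT : Measurable T)
    (hβ : ∀ i, β.real (T ⁻¹' {i}) ≠ 0) : (gibbsCoupling α β u T).map Prod.fst = α := by
  rw [gibbsCoupling, fst_withDensity_prod (measurable_gibbsDensity hu hT).ennreal_ofReal]
  simp only [lintegral_gibbsDensity_snd hT hβ, ← Pi.one_def, withDensity_one]

theorem map_snd_gibbsCoupling (hu : Measurable u) (hT : Measurable T)
    (hβ : ∀ i, β.real (T ⁻¹' {i}) ≠ 0)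
    (hbal : ∀ i, ∫ x, softmax (u x) i ∂α = β.real (T ⁻¹' {i})) :
    (gibbsCoupling α β u T).map Prod.snd = β := by
  rw [gibbsCoupling, snd_withDensity_prod (measurable_gibbsDensity hu hT).ennreal_ofReal]
  simp only [lintegral_gibbsDensity_fst hu hβ hbal, ← Pi.one_def, withDensity_one]

theorem neg_sum_inv_le_integral_log_softmax_gibbsCoupling (hu : Measurable u) (hT : Measurable T) :
    -∑ i, (β.real (T ⁻¹' {i}))⁻¹ ≤
      ∫ p, Real.log (softmax (u p.1) (T p.2)) ∂gibbsCoupling α β u T := by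
  have hinv (i : ι) : 0 ≤ (β.real (T ⁻¹' {i}))⁻¹ := inv_nonneg.2 measureReal_nonneg
  have hbound (p : X × Y) : ‖(ENNReal.ofReal (gibbsDensity β u T p)).toReal •
      Real.log (softmax (u p.1) (T p.2))‖ ≤ ∑ i, (β.real (T ⁻¹' {i}))⁻¹ := by
    calc _ = |Real.log (softmax (u p.1) (T p.2)) * softmax (u p.1) (T p.2)| *
          (β.real (T ⁻¹' {T p.2}))⁻¹ := by
          rw [gibbsDensity, ENNReal.toReal_ofReal (div_nonneg (softmax_pos _ _).le
            measureReal_nonneg), smul_eq_mul, div_eq_mul_inv, mul_right_comm, Real.norm_eq_abs,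
            abs_mul, abs_of_nonneg (hinv _), mul_comm (softmax _ _)]
      _ ≤ 1 * (β.real (T ⁻¹' {T p.2}))⁻¹ := mul_le_mul_of_nonneg_right
          (Real.abs_log_mul_self_lt _ (softmax_pos _ _) (softmax_le_one _ _)).le (hinv _)
      _ ≤ ∑ i, (β.real (T ⁻¹' {i}))⁻¹ := by
          rw [one_mul]
          exact Finset.single_le_sum (f := fun i ↦ (β.real (T ⁻¹' {i}))⁻¹) (fun i _ ↦ hinv i)
            (Finset.mem_univ (T p.2))
  have hnorm := norm_integral_le_of_norm_le_const (μ := α.prod β) (ae_of_all _ hbound)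
  rw [gibbsCoupling, integral_withDensity_eq_integral_toReal_smul
    (measurable_gibbsDensity hu hT).ennreal_ofReal (ae_of_all _ fun _ ↦ ENNReal.ofReal_lt_top)]
  rw [probReal_univ, mul_one] at hnorm
  exact neg_le_of_abs_le hnorm

end GibbsCoupling

section ConvexConjugate

variable {E : Type*} [NormedAddCommGroup E] [InnerProductSpace ℝ E]

/-- The Legendre–Fenchel conjugate `f^*(y) = sup_x (⟨x,y⟩ − f x)`, which is dual to `f` in the
Kantorovich problem. It is real-valued, with junk value `0` where the supremum is infinite. -/
def convexConjugate (f : E → ℝ) (y : E) : ℝ := ⨆ x, (⟪x, y⟫ - f x)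

/-- The `ε`-subdifferential of `f` at `x`: the slopes of the affine functions that lie below `f`
everywhere and within `ε` of `f` at `x`. Slopes of this kind, unlike exact subgradients, can be
selected from a countable set, hence measurably. -/
def epsSubdifferential (ε : ℝ) (f : E → ℝ) (x : E) : Set E :=
  {p | ∀ z, f x + ⟪z - x, p⟫ ≤ f z + ε}

variable {f : E → ℝ} {x p : E} {ε : ℝ}

theorem inner_sub_le_of_mem_epsSubdifferential (hp : p ∈ epsSubdifferential ε f x) (z : E) :
    ⟪z, p⟫ - f z ≤ ⟪x, p⟫ - f x + ε := by
  have := hp z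
  rw [inner_sub_left] at this
  linarith

theorem convexConjugate_le_of_mem_epsSubdifferential (hp : p ∈ epsSubdifferential ε f x) :
    convexConjugate f p ≤ ⟪x, p⟫ - f x + ε :=
  ciSup_le (inner_sub_le_of_mem_epsSubdifferential hp)

theorem inner_le_add_convexConjugate (hp : p ∈ epsSubdifferential ε f x) (z : E) :
    ⟪z, p⟫ ≤ f z + convexConjugate f p := by
  have := le_ciSup (f := fun z ↦ ⟪z, p⟫ - f z)
    ⟨_, Set.forall_mem_range.2 (inner_sub_le_of_mem_epsSubdifferential hp)⟩ z
  rw [convexConjugate]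
  linarith

theorem norm_le_of_mem_epsSubdifferential {K : NNReal} (hf : LipschitzWith K f)
    (hp : p ∈ epsSubdifferential ε f x) : ‖p‖ ≤ K := by
  by_contra! hlt
  have hpos : 0 < ‖p‖ * (‖p‖ - K) := mul_pos (K.coe_nonneg.trans_lt hlt) (sub_pos.2 hlt)
  obtain ⟨n, hn⟩ := exists_nat_gt (ε / (‖p‖ * (‖p‖ - K)))
  have hlow := hp (x + (n : ℝ) • p)
  have hlip := hf.dist_le_mul (x + (n : ℝ) • p) x
  rw [add_sub_cancel_left, real_inner_smul_left, real_inner_self_eq_norm_sq] at hlow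
  rw [dist_self_add_left, norm_smul, Real.norm_natCast] at hlip
  rw [div_lt_iff₀ hpos] at hn
  nlinarith [(le_abs_self _).trans hlip]

theorem measurable_convexConjugate [MeasurableSpace E] [BorelSpace E] [SecondCountableTopology E]
    (hf : Continuous f) : Measurable (convexConjugate f) := by
  obtain ⟨s, hs, hdense⟩ := TopologicalSpace.exists_countable_dense E
  have := hs.to_subtype
  have hsup : convexConjugate f = fun y ↦ ⨆ x : s, (⟪(x : E), y⟫ - f x) :=
    funext fun y ↦ (hdense.ciSup' (f := fun x ↦ ⟪x, y⟫ - f x) (by fun_prop)).symm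
  rw [hsup]
  exact Measurable.iSup fun x ↦ by fun_prop

theorem exists_measurable_epsSubgradient [CompleteSpace E] [MeasurableSpace E] [BorelSpace E]
    [SecondCountableTopology E] (hconv : ConvexOn ℝ Set.univ f) (hcont : Continuous f)
    (hε : 0 < ε) : ∃ G : E → E, Measurable G ∧ (Set.range G).Countable ∧
      ∀ x, G x ∈ epsSubdifferential ε f x := by
  classical
  obtain ⟨l, c, hle, hsup⟩ :=
    ConvexOn.real_univ_sSup_of_nat_affine_eq hcont.lowerSemicontinuous hconv
  replace hle (n : ℕ) (x : E) : l n x + c n ≤ f x := hle n x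
  have hex (x : E) : ∃ n, f x - ε < l n x + c n := by
    have hfx : ⨆ n, (l n x + c n) = f x := by
      rw [← hsup, iSup_apply]
      rfl
    exact exists_lt_of_lt_ciSup (by linarith)
  have hmeas : Measurable fun x ↦ Nat.find (hex x) := measurable_find hex fun n ↦
    measurableSet_lt (by fun_prop) (by fun_prop)
  let slope (n : ℕ) : E := (InnerProductSpace.toDual ℝ E).symm (l n)
  have hslope (n : ℕ) (z : E) : ⟪z, slope n⟫ = l n z := by
    rw [real_inner_comm, InnerProductSpace.toDual_symm_apply]
  refine ⟨fun x ↦ slope (Nat.find (hex x)), (measurable_of_countable slope).comp hmeas,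
    (Set.countable_range slope).mono (Set.range_comp_subset_range _ slope), fun x z ↦ ?_⟩
  have hx := Nat.find_spec (hex x)
  have hz := hle (Nat.find (hex x)) z
  rw [hslope, map_sub]
  linarith

end ConvexConjugate

section Quantization

variable {E : Type*} [MetricSpace E] [MeasurableSpace E] [OpensMeasurableSpace E] {K : Set E}
  {ε : ℝ}

theorem exists_simpleFunc_dist_lt (hK : TotallyBounded K) (hne : K.Nonempty) (hε : 0 < ε) :
    ∃ T : SimpleFunc E E, (∀ y, T y ∈ K) ∧ ∀ y ∈ K, dist (T y) y < ε := by
  obtain ⟨t, htK, htfin, hcover⟩ := finite_approx_of_totallyBounded hK ε hε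
  have htne : t.Nonempty := (Set.nonempty_biUnion.1 (hne.mono hcover)).imp fun _ h ↦ h.1
  obtain ⟨e, rfl⟩ := htfin.countable.exists_eq_range htne
  choose! k hk using fun y (hy : y ∈ Set.range e) ↦ hy
  obtain ⟨N, hN⟩ := (htfin.image k).bddAbove
  refine ⟨SimpleFunc.nearestPt e N, fun y ↦ htK (Set.mem_range_self _), fun y hy ↦ ?_⟩
  obtain ⟨z, hz, hyz⟩ := Set.mem_iUnion₂.1 (hcover hy)
  have hnear := SimpleFunc.edist_nearestPt_le e y (hN (Set.mem_image_of_mem k hz))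
  rw [hk z hz, edist_dist, edist_dist, ENNReal.ofReal_le_ofReal_iff dist_nonneg] at hnear
  exact hnear.trans_lt (mem_ball'.1 hyz)

theorem exists_measurable_finite_quantization {β : Measure E} [IsProbabilityMeasure β]
    (hK : TotallyBounded K) (hβ : ∀ᵐ y ∂β, y ∈ K) (hε : 0 < ε) :
    ∃ (s : Finset E) (T : E → s), ↑s ⊆ K ∧ Measurable T ∧ (∀ z : s, β (T ⁻¹' {z}) ≠ 0) ∧
      ∀ᵐ y ∂β, dist (T y : E) y < ε := by
  classical
  obtain ⟨T₀, hT₀K, hT₀⟩ := exists_simpleFunc_dist_lt hK hβ.exists hε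
  let s : Finset E := T₀.range.filter fun z ↦ β (T₀ ⁻¹' {z}) ≠ 0
  have hs : ∀ᵐ y ∂β, T₀ y ∈ s := by
    have hnull : ∀ᵐ y ∂β, ∀ z ∈ T₀.range.filter fun z ↦ β (T₀ ⁻¹' {z}) = 0, T₀ y ≠ z :=
      (ae_ball_iff (Finset.countable_toSet _)).2 fun z hz ↦
        measure_eq_zero_iff_ae_notMem.1 (Finset.mem_filter.1 hz).2
    filter_upwards [hnull] with y hy
    by_contra hys
    exact hy (T₀ y) (by simp_all [s]) rfl
  obtain ⟨y₀, hy₀⟩ := hs.exists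
  let g (z : E) : s := if hz : z ∈ s then ⟨z, hz⟩ else ⟨T₀ y₀, hy₀⟩
  have hg {z : E} (hz : z ∈ s) : g z = ⟨z, hz⟩ := dif_pos hz
  refine ⟨s, T₀.map g, fun z hz ↦ ?_, (T₀.map g).measurable, fun z hz ↦ ?_, ?_⟩
  · obtain ⟨y, rfl⟩ := SimpleFunc.mem_range.1 (Finset.mem_filter.1 hz).1
    exact hT₀K y
  · refine (Finset.mem_filter.1 z.2).2 (measure_mono_null (fun y hy ↦ ?_) hz)
    have hy' : T₀ y = z := hy
    simp [hy', hg z.2]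
  · filter_upwards [hs, hβ] with y hys hyK
    simpa [hg hys] using hT₀ y hyK

end Quantization
theorem integral_comp_of_measurePreserving {X Y : Type*} [MeasurableSpace X] [MeasurableSpace Y]
    {μ : Measure X} {ν : Measure Y} {g : X → Y} (hg : MeasurePreserving g μ ν) {φ : Y → ℝ}
    (hφ : AEStronglyMeasurable φ ν) : ∫ x, φ (g x) ∂μ = ∫ y, φ y ∂ν := by
  obtain ⟨hmeas, rfl⟩ := hg
  exact (integral_map hmeas.aemeasurable hφ).symm

theorem integral_fst_add_snd_of_measurePreserving {X Y : Type*} [MeasurableSpace X]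
    [MeasurableSpace Y] {α : Measure X} {β : Measure Y} {π : Measure (X × Y)}
    (hfst : MeasurePreserving Prod.fst π α) (hsnd : MeasurePreserving Prod.snd π β)
    {φ : X → ℝ} {ψ : Y → ℝ} (hφ : Integrable φ α) (hψ : Integrable ψ β) :
    ∫ p, (φ p.1 + ψ p.2) ∂π = ∫ x, φ x ∂α + ∫ y, ψ y ∂β := by
  rw [← integral_comp_of_measurePreserving hfst hφ.1,
    ← integral_comp_of_measurePreserving hsnd hψ.1]
  exact integral_add (hfst.integrable_comp_of_integrable hφ)
    (hsnd.integrable_comp_of_integrable hψ)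

section InnerIntegral

variable {E : Type*} [NormedAddCommGroup E] [InnerProductSpace ℝ E] {ε R : ℝ}

theorem inner_le_inner_add_mul_norm {y z : E} (h : dist y z ≤ ε) (x : E) :
    ⟪x, y⟫ ≤ ⟪x, z⟫ + ε * ‖x‖ := by
  rw [← sub_le_iff_le_add', ← inner_sub_right, mul_comm]
  rw [dist_eq_norm] at h
  exact (real_inner_le_norm _ _).trans (mul_le_mul_of_nonneg_left h (norm_nonneg x))

variable {X : Type*} [MeasurableSpace X] {π : Measure X} {u v w : X → E}

theorem ae_abs_inner_le (hv : ∀ᵐ p ∂π, ‖v p‖ ≤ R) : ∀ᵐ p ∂π, |⟪u p, v p⟫| ≤ R * ‖u p‖ := by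
  filter_upwards [hv] with p hp
  rw [mul_comm]
  exact (abs_real_inner_le_norm _ _).trans (mul_le_mul_of_nonneg_left hp (norm_nonneg _))

theorem integrable_inner_of_ae_norm_le (hu : Integrable (fun p ↦ ‖u p‖) π)
    (huv : AEStronglyMeasurable (fun p ↦ ⟪u p, v p⟫) π) (hv : ∀ᵐ p ∂π, ‖v p‖ ≤ R) :
    Integrable (fun p ↦ ⟪u p, v p⟫) π :=
  (hu.const_mul R).mono' huv (ae_abs_inner_le hv)

theorem abs_integral_inner_le (hu : Integrable (fun p ↦ ‖u p‖) π) (hv : ∀ᵐ p ∂π, ‖v p‖ ≤ R) :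
    |∫ p, ⟪u p, v p⟫ ∂π| ≤ R * ∫ p, ‖u p‖ ∂π := by
  rw [← integral_const_mul, ← Real.norm_eq_abs]
  exact norm_integral_le_of_norm_le (hu.const_mul R) (ae_abs_inner_le hv)

theorem integral_inner_le_integral_inner_add (hu : Integrable (fun p ↦ ‖u p‖) π)
    (hv : Integrable (fun p ↦ ⟪u p, v p⟫) π)
    (hw : Integrable (fun p ↦ ⟪u p, w p⟫) π) (h : ∀ᵐ p ∂π, dist (v p) (w p) ≤ ε) :
    ∫ p, ⟪u p, v p⟫ ∂π ≤ ∫ p, ⟪u p, w p⟫ ∂π + ε * ∫ p, ‖u p‖ ∂π := by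
  rw [← integral_const_mul, ← integral_add hw (hu.const_mul ε)]
  refine integral_mono_ae hv (hw.add (hu.const_mul ε)) ?_
  filter_upwards [h] with p hp using inner_le_inner_add_mul_norm hp (u p)

end InnerIntegral

section Couplings

variable {d : ℕ} {α β : Measure (EuclideanSpace ℝ (Fin d))}
  {π : Measure (EuclideanSpace ℝ (Fin d) × EuclideanSpace ℝ (Fin d))} {R : ℝ}

theorem measurePreserving_fst_of_mem_couplings (hπ : π ∈ Couplings α β) :
    MeasurePreserving Prod.fst π α := ⟨measurable_fst, hπ.1⟩

theorem measurePreserving_snd_of_mem_couplings (hπ : π ∈ Couplings α β) :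
    MeasurePreserving Prod.snd π β := ⟨measurable_snd, hπ.2⟩

theorem prod_mem_couplings [IsProbabilityMeasure α] [IsProbabilityMeasure β] :
    α.prod β ∈ Couplings α β := by
  simp [Couplings]

theorem map_prodMk_mem_couplings
    {G : EuclideanSpace ℝ (Fin d) → EuclideanSpace ℝ (Fin d)} (hG : Measurable G) :
    α.map (fun x ↦ (x, G x)) ∈ Couplings α (α.map G) := by
  have hgraph : Measurable fun x ↦ (x, G x) := measurable_id.prodMk hG
  exact ⟨(Measure.map_map measurable_fst hgraph).trans Measure.map_id,
    Measure.map_map measurable_snd hgraph⟩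

theorem integrable_comp_fst_of_mem_couplings (hπ : π ∈ Couplings α β)
    {φ : EuclideanSpace ℝ (Fin d) → ℝ} (hφ : Integrable φ α) : Integrable (fun p ↦ φ p.1) π :=
  (measurePreserving_fst_of_mem_couplings hπ).integrable_comp_of_integrable hφ

theorem integrable_comp_snd_of_mem_couplings (hπ : π ∈ Couplings α β)
    {ψ : EuclideanSpace ℝ (Fin d) → ℝ} (hψ : Integrable ψ β) : Integrable (fun p ↦ ψ p.2) π :=
  (measurePreserving_snd_of_mem_couplings hπ).integrable_comp_of_integrable hψ

theorem ae_norm_snd_le_of_mem_couplings (hπ : π ∈ Couplings α β) (hβ : ∀ᵐ y ∂β, ‖y‖ ≤ R) :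
    ∀ᵐ p ∂π, ‖p.2‖ ≤ R :=
  (measurePreserving_snd_of_mem_couplings hπ).quasiMeasurePreserving.ae hβ

theorem integrable_inner_of_mem_couplings (hπ : π ∈ Couplings α β)
    (hα : Integrable (fun x ↦ ‖x‖) α) (hβ : ∀ᵐ y ∂β, ‖y‖ ≤ R) :
    Integrable (fun p ↦ ⟪p.1, p.2⟫) π :=
  integrable_inner_of_ae_norm_le (integrable_comp_fst_of_mem_couplings hπ hα) (by fun_prop)
    (ae_norm_snd_le_of_mem_couplings hπ hβ)

theorem abs_integral_inner_le_of_mem_couplings (hπ : π ∈ Couplings α β)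
    (hα : Integrable (fun x ↦ ‖x‖) α) (hβ : ∀ᵐ y ∂β, ‖y‖ ≤ R) :
    |∫ p, ⟪p.1, p.2⟫ ∂π| ≤ R * ∫ x, ‖x‖ ∂α := by
  rw [← integral_comp_of_measurePreserving (measurePreserving_fst_of_mem_couplings hπ) hα.1]
  exact abs_integral_inner_le (integrable_comp_fst_of_mem_couplings hπ hα)
    (ae_norm_snd_le_of_mem_couplings hπ hβ)

theorem integral_inner_le_OTcost (hπ : π ∈ Couplings α β) (hα : Integrable (fun x ↦ ‖x‖) α)
    (hβ : ∀ᵐ y ∂β, ‖y‖ ≤ R) : ∫ p, ⟪p.1, p.2⟫ ∂π ≤ OTcost α β := by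
  refine le_csSup ⟨R * ∫ x, ‖x‖ ∂α, ?_⟩ ⟨π, hπ, rfl⟩
  rintro _ ⟨π', hπ', rfl⟩
  exact le_of_abs_le (abs_integral_inner_le_of_mem_couplings hπ' hα hβ)

theorem OTcost_le [IsProbabilityMeasure α] [IsProbabilityMeasure β] {c : ℝ}
    (h : ∀ π ∈ Couplings α β, ∫ p, ⟪p.1, p.2⟫ ∂π ≤ c) : OTcost α β ≤ c := by
  refine csSup_le ⟨_, α.prod β, prod_mem_couplings, rfl⟩ ?_
  rintro _ ⟨π, hπ, rfl⟩
  exact h π hπ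

theorem abs_OTcost_le [IsProbabilityMeasure α] [IsProbabilityMeasure β]
    (hα : Integrable (fun x ↦ ‖x‖) α) (hβ : ∀ᵐ y ∂β, ‖y‖ ≤ R) :
    |OTcost α β| ≤ R * ∫ x, ‖x‖ ∂α := by
  have hbound (π) (hπ : π ∈ Couplings α β) := abs_integral_inner_le_of_mem_couplings hπ hα hβ
  exact abs_le.2 ⟨(neg_le_of_abs_le (hbound _ prod_mem_couplings)).trans
    (integral_inner_le_OTcost prod_mem_couplings hα hβ),
    OTcost_le fun π hπ ↦ le_of_abs_le (hbound π hπ)⟩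

theorem OTcost_le_integral_add_integral [IsProbabilityMeasure α] [IsProbabilityMeasure β]
    (hα : Integrable (fun x ↦ ‖x‖) α) (hβ : ∀ᵐ y ∂β, ‖y‖ ≤ R)
    {φ ψ : EuclideanSpace ℝ (Fin d) → ℝ} (hφ : Integrable φ α) (hψ : Integrable ψ β)
    (h : ∀ᵐ y ∂β, ∀ x, ⟪x, y⟫ ≤ φ x + ψ y) :
    OTcost α β ≤ ∫ x, φ x ∂α + ∫ y, ψ y ∂β := by
  refine OTcost_le fun π hπ ↦ ?_
  rw [← integral_fst_add_snd_of_measurePreserving (measurePreserving_fst_of_mem_couplings hπ)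
    (measurePreserving_snd_of_mem_couplings hπ) hφ hψ]
  refine integral_mono_ae (integrable_inner_of_mem_couplings hπ hα hβ)
    ((integrable_comp_fst_of_mem_couplings hπ hφ).add
      (integrable_comp_snd_of_mem_couplings hπ hψ)) ?_
  filter_upwards [(measurePreserving_snd_of_mem_couplings hπ).quasiMeasurePreserving.ae h]
    with p hp using hp p.1

end Couplings

section SmoothMaxAffine

variable {ι E : Type*} [Fintype ι] [NormedAddCommGroup E] [InnerProductSpace ℝ E]

/-- The smooth maximum, at temperature `δ`, of the affine functions `x ↦ ⟨x, zᵢ⟩ - δ ψᵢ`; with the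
potential `ψ` minimizing `entropicDual`, it is the convex potential of the regularized transport to
the atoms `z`. -/
def smoothMaxAffine (δ : ℝ) (z : ι → E) (ψ : ι → ℝ) (x : E) : ℝ :=
  δ * logSumExp fun i ↦ δ⁻¹ * ⟪x, z i⟫ - ψ i

variable {δ : ℝ} {z : ι → E} {ψ : ι → ℝ}

theorem smoothMaxAffine_eq (hδ : 0 < δ) (x : E) (i : ι) :
    smoothMaxAffine δ z ψ x + δ * ψ i =
      ⟪x, z i⟫ - δ * Real.log (softmax (fun j ↦ δ⁻¹ * ⟪x, z j⟫ - ψ j) i) := by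
  rw [log_softmax, smoothMaxAffine, mul_sub, mul_sub, mul_inv_cancel_left₀ hδ.ne']
  ring

variable [Nonempty ι]

theorem inner_le_smoothMaxAffine_add (hδ : 0 < δ) (x : E) (i : ι) :
    ⟪x, z i⟫ ≤ smoothMaxAffine δ z ψ x + δ * ψ i := by
  rw [smoothMaxAffine_eq hδ x i, le_sub_self_iff]
  exact mul_nonpos_of_nonneg_of_nonpos hδ.le
    (Real.log_nonpos (softmax_pos _ _).le (softmax_le_one _ _))

theorem convexOn_smoothMaxAffine (hδ : 0 < δ) :
    ConvexOn ℝ Set.univ (smoothMaxAffine δ z ψ) := by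
  let L : E →ᵃ[ℝ] ι → ℝ :=
    (LinearMap.pi fun i ↦ δ⁻¹ • (innerₗ E).flip (z i)).toAffineMap - AffineMap.const ℝ E ψ
  exact (convexOn_logSumExp.comp_affineMap L).smul hδ.le

theorem lipschitzWith_smoothMaxAffine (hδ : 0 < δ) {K : NNReal} (hz : ∀ i, ‖z i‖ ≤ K) :
    LipschitzWith K (smoothMaxAffine δ z ψ) := by
  refine LipschitzWith.of_le_add_mul K fun x y ↦ ?_
  have hinner (i : ι) : ⟪x, z i⟫ ≤ ⟪y, z i⟫ + K * dist x y := by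
    have := (real_inner_le_norm (x - y) (z i)).trans
      (mul_le_mul_of_nonneg_left (hz i) (norm_nonneg _))
    rw [inner_sub_left, ← dist_eq_norm] at this
    linarith
  calc smoothMaxAffine δ z ψ x
      ≤ δ * (logSumExp (fun i ↦ δ⁻¹ * ⟪y, z i⟫ - ψ i) + δ⁻¹ * (K * dist x y)) := by
        refine mul_le_mul_of_nonneg_left (logSumExp_le_add fun i ↦ ?_) hδ.le
        linarith [mul_le_mul_of_nonneg_left (hinner i) (inv_nonneg.2 hδ.le)]
    _ = smoothMaxAffine δ z ψ y + K * dist x y := by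
        rw [mul_add, mul_inv_cancel_left₀ hδ.ne', smoothMaxAffine]

end SmoothMaxAffine

section Duality

variable {E : Type*} [NormedAddCommGroup E] [MeasurableSpace E] {α β : Measure E} {f : E → ℝ}

theorem ae_norm_le_of_measure_compl_closedBall_eq_zero {R : ℝ} (h : α (closedBall 0 R)ᶜ = 0) :
    ∀ᵐ y ∂α, ‖y‖ ≤ R := by
  filter_upwards [mem_ae_iff.2 h] with y hy using mem_closedBall_zero_iff.1 hy

variable [BorelSpace E] [SecondCountableTopology E]

theorem integrable_of_lipschitzWith [IsFiniteMeasure α] {K : NNReal} (hf : LipschitzWith K f)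
    (hα : Integrable (fun x ↦ ‖x‖) α) : Integrable f α :=
  integrable_comp_of_lipschitzWith hf ((integrable_norm_iff aestronglyMeasurable_id).1 hα)

theorem abs_integral_sub_integral_le_of_lipschitzWith [IsProbabilityMeasure α]
    [IsProbabilityMeasure β] {K : NNReal} (hf : LipschitzWith K f)
    (hα : Integrable (fun x ↦ ‖x‖) α) (hβ : Integrable (fun x ↦ ‖x‖) β) :
    |∫ x, f x ∂α - ∫ x, f x ∂β| ≤ K * (∫ x, ‖x‖ ∂α + ∫ x, ‖x‖ ∂β) := by
  have hdev {γ : Measure E} [IsProbabilityMeasure γ] (hγ : Integrable (fun x ↦ ‖x‖) γ) :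
      |∫ x, f x ∂γ - f 0| ≤ K * ∫ x, ‖x‖ ∂γ := by
    have heq : ∫ x, f x ∂γ - f 0 = ∫ x, (f x - f 0) ∂γ := by
      rw [integral_sub (integrable_of_lipschitzWith hf hγ) (integrable_const _), integral_const,
        probReal_univ, one_smul]
    rw [heq, ← integral_const_mul, ← Real.norm_eq_abs]
    refine norm_integral_le_of_norm_le (hγ.const_mul _) (ae_of_all _ fun x ↦ ?_)
    simpa only [dist_eq_norm, sub_zero] using hf.dist_le_mul x 0
  rw [mul_add]
  refine (abs_sub_le _ (f 0) _).trans (add_le_add (hdev hα) ?_)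
  rw [abs_sub_comm]
  exact hdev hβ

variable [InnerProductSpace ℝ E] {G : E → E} {ε : ℝ}

theorem integrable_convexConjugate_map [IsFiniteMeasure α] (hf : Continuous f)
    (hfα : Integrable f α) (hG : Measurable G) (hinner : Integrable (fun x ↦ ⟪x, G x⟫) α)
    (hsub : ∀ x, G x ∈ epsSubdifferential ε f x) : Integrable (convexConjugate f) (α.map G) := by
  have hmeas := measurable_convexConjugate hf
  refine (integrable_map_measure hmeas.aestronglyMeasurable hG.aemeasurable).2 <|
    integrable_of_le_of_le (hmeas.comp hG).aestronglyMeasurable (ae_of_all _ fun x ↦ ?_)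
    (ae_of_all _ fun x ↦ convexConjugate_le_of_mem_epsSubdifferential (hsub x))
    (hinner.sub hfα) ((hinner.sub hfα).add (integrable_const ε))
  exact sub_le_iff_le_add'.2 (inner_le_add_convexConjugate (hsub x) x)

theorem integral_convexConjugate_map_le [IsProbabilityMeasure α] (hf : Continuous f)
    (hfα : Integrable f α) (hG : Measurable G) (hinner : Integrable (fun x ↦ ⟪x, G x⟫) α)
    (hsub : ∀ x, G x ∈ epsSubdifferential ε f x) :
    ∫ y, convexConjugate f y ∂(α.map G) ≤ ∫ x, ⟪x, G x⟫ ∂α - ∫ x, f x ∂α + ε := by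
  have hint := integrable_convexConjugate_map hf hfα hG hinner hsub
  rw [integral_map hG.aemeasurable hint.1]
  calc ∫ x, convexConjugate f (G x) ∂α ≤ ∫ x, (⟪x, G x⟫ - f x + ε) ∂α :=
        integral_mono (hint.comp_measurable hG) ((hinner.sub hfα).add (integrable_const ε))
          fun x ↦ convexConjugate_le_of_mem_epsSubdifferential (hsub x)
    _ = ∫ x, ⟪x, G x⟫ ∂α - ∫ x, f x ∂α + ε := by
        rw [integral_add (f := fun x ↦ ⟪x, G x⟫ - f x) (hinner.sub hfα) (integrable_const ε),
          integral_sub hinner hfα, integral_const, probReal_univ, one_smul]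

variable {Y : Type*} [MeasurableSpace Y] {β : Measure Y}

theorem integrable_inner_snd_of_measurePreserving {ι : Type*} [Countable ι] [MeasurableSpace ι]
    [MeasurableSingletonClass ι] {T : Y → ι} (hT : Measurable T) {z : ι → E} {R : ℝ}
    (hz : ∀ i, ‖z i‖ ≤ R) (hα : Integrable (fun x ↦ ‖x‖) α) {π : Measure (E × Y)}
    (hfst : MeasurePreserving Prod.fst π α) :
    Integrable (fun p ↦ ⟪p.1, z (T p.2)⟫) π := by
  have hzT : Measurable fun p : E × Y ↦ z (T p.2) :=
    (measurable_of_countable z).comp (hT.comp measurable_snd)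
  exact integrable_inner_of_ae_norm_le (hfst.integrable_comp_of_integrable hα)
    (measurable_fst.inner hzT).aestronglyMeasurable (ae_of_all _ fun p ↦ hz (T p.2))

variable [IsProbabilityMeasure α] [IsProbabilityMeasure β] {ι : Type*} [Nonempty ι]
  [MeasurableSpace ι] [MeasurableSingletonClass ι] {T : Y → ι} {K : NNReal} {z : ι → E}

theorem exists_integral_smoothMaxAffine_add_le [Fintype ι] {δ : ℝ} {ψ : ι → ℝ} (hδ : 0 < δ)
    (hT : Measurable T) (hz : ∀ i, ‖z i‖ ≤ K) (hα : Integrable (fun x ↦ ‖x‖) α)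
    (hβ : ∀ i, β.real (T ⁻¹' {i}) ≠ 0)
    (hbal : ∀ i, ∫ x, softmax (fun j ↦ δ⁻¹ * ⟪x, z j⟫ - ψ j) i ∂α = β.real (T ⁻¹' {i})) :
    ∃ π : Measure (E × Y), MeasurePreserving Prod.fst π α ∧ MeasurePreserving Prod.snd π β ∧
      ∫ x, smoothMaxAffine δ z ψ x ∂α + ∫ y, δ * ψ (T y) ∂β ≤
        ∫ p, ⟪p.1, z (T p.2)⟫ ∂π + δ * ∑ i, (β.real (T ⁻¹' {i}))⁻¹ := by
  let u (x : E) (j : ι) : ℝ := δ⁻¹ * ⟪x, z j⟫ - ψ j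
  have hu : Measurable u := by fun_prop
  let π := gibbsCoupling α β u T
  have hfst : MeasurePreserving Prod.fst π α := ⟨measurable_fst, map_fst_gibbsCoupling hu hT hβ⟩
  have hsnd : MeasurePreserving Prod.snd π β :=
    ⟨measurable_snd, map_snd_gibbsCoupling hu hT hβ hbal⟩
  have hf : Integrable (smoothMaxAffine δ z ψ) α :=
    integrable_of_lipschitzWith (lipschitzWith_smoothMaxAffine hδ hz) hα
  have hψ : Integrable (fun y ↦ δ * ψ (T y)) β :=
    (Integrable.of_finite.comp_measurable hT).const_mul δ
  have hinner := integrable_inner_snd_of_measurePreserving hT hz hα hfst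
  have hlog (p : E × Y) : δ * Real.log (softmax (u p.1) (T p.2)) =
      ⟪p.1, z (T p.2)⟫ - (smoothMaxAffine δ z ψ p.1 + δ * ψ (T p.2)) := by
    rw [smoothMaxAffine_eq hδ, sub_sub_cancel]
  have hpot : Integrable (fun p : E × Y ↦ smoothMaxAffine δ z ψ p.1 + δ * ψ (T p.2)) π :=
    (hfst.integrable_comp_of_integrable hf).add (hsnd.integrable_comp_of_integrable hψ)
  have hentropy := mul_le_mul_of_nonneg_left
    (neg_sum_inv_le_integral_log_softmax_gibbsCoupling (α := α) (β := β) hu hT) hδ.le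
  rw [← integral_const_mul, integral_congr_ae (ae_of_all _ hlog), integral_sub hinner hpot,
    integral_fst_add_snd_of_measurePreserving hfst hsnd hf hψ] at hentropy
  exact ⟨π, hfst, hsnd, by linarith⟩

theorem exists_dual_le_integral_add_of_finite [Finite ι] (hT : Measurable T)
    (hβ : ∀ i, β.real (T ⁻¹' {i}) ≠ 0) (hz : ∀ i, ‖z i‖ ≤ K)
    (hα : Integrable (fun x ↦ ‖x‖) α) {ε : ℝ} (hε : 0 < ε) :
    ∃ (f : E → ℝ) (ψ : ι → ℝ), ConvexOn ℝ Set.univ f ∧ LipschitzWith K f ∧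
      (∀ x i, ⟪x, z i⟫ ≤ f x + ψ i) ∧
      ∃ π : Measure (E × Y), MeasurePreserving Prod.fst π α ∧ MeasurePreserving Prod.snd π β ∧
        ∫ x, f x ∂α + ∫ y, ψ (T y) ∂β ≤ ∫ p, ⟪p.1, z (T p.2)⟫ ∂π + ε := by
  have := Fintype.ofFinite ι
  have hcell (i : ι) : 0 < β.real (T ⁻¹' {i}) := measureReal_nonneg.lt_of_ne' (hβ i)
  have hsum : ∑ i, β.real (T ⁻¹' {i}) = 1 := by
    rw [sum_measureReal_preimage_singleton _ fun i _ ↦ hT (measurableSet_singleton i),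
      Finset.coe_univ, Set.preimage_univ, probReal_univ]
  have hA : 0 < ∑ i, (β.real (T ⁻¹' {i}))⁻¹ :=
    Finset.sum_pos (fun i _ ↦ inv_pos.2 (hcell i)) Finset.univ_nonempty
  let δ := ε / ∑ i, (β.real (T ⁻¹' {i}))⁻¹
  have hδ : 0 < δ := div_pos hε hA
  have hv : Integrable (fun x j ↦ δ⁻¹ * ⟪x, z j⟫) α :=
    Integrable.of_eval fun j ↦
      (integrable_inner_of_ae_norm_le hα (by fun_prop) (ae_of_all _ fun _ ↦ hz j)).const_mul _
  obtain ⟨ψ, hbal⟩ := exists_integral_softmax_sub_eq hv hcell hsum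
  obtain ⟨π, hfst, hsnd, hle⟩ := exists_integral_smoothMaxAffine_add_le hδ hT hz hα hβ hbal
  rw [div_mul_cancel₀ ε hA.ne'] at hle
  exact ⟨smoothMaxAffine δ z ψ, fun i ↦ δ * ψ i, convexOn_smoothMaxAffine hδ,
    lipschitzWith_smoothMaxAffine hδ hz, inner_le_smoothMaxAffine_add hδ, π, hfst, hsnd, hle⟩

end Duality

section Euclidean

variable {d : ℕ} {μ ν α β : Measure (EuclideanSpace ℝ (Fin d))} {ε : ℝ}

theorem integral_inner_le_OTcost_map {G : EuclideanSpace ℝ (Fin d) → EuclideanSpace ℝ (Fin d)}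
    {R : ℝ} (hG : Measurable G) (hR : ∀ x, ‖G x‖ ≤ R) (hα : Integrable (fun x ↦ ‖x‖) α) :
    ∫ x, ⟪x, G x⟫ ∂α ≤ OTcost α (α.map G) := by
  have hnorm : ∀ᵐ y ∂(α.map G), ‖y‖ ≤ R :=
    (ae_map_iff hG.aemeasurable (measurableSet_le measurable_norm measurable_const)).2
      (ae_of_all _ hR)
  have hle := integral_inner_le_OTcost (map_prodMk_mem_couplings (α := α) hG) hα hnorm
  have hgraph : Measurable fun x ↦ (x, G x) := measurable_id.prodMk hG
  rwa [integral_map hgraph.aemeasurable (by fun_prop)] at hle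

variable [IsProbabilityMeasure μ] [IsProbabilityMeasure ν]

theorem exists_OTcost_sub_le_integral_sub {f : EuclideanSpace ℝ (Fin d) → ℝ}
    (hμ : Integrable (fun x ↦ ‖x‖) μ) (hν : Integrable (fun x ↦ ‖x‖) ν)
    (hconv : ConvexOn ℝ Set.univ f) (hf : LipschitzWith 1 f) (hε : 0 < ε) :
    ∃ ρ : Measure (EuclideanSpace ℝ (Fin d)), IsProbabilityMeasure ρ ∧
      ρ (closedBall 0 1)ᶜ = 0 ∧ OTcost ν ρ - OTcost μ ρ ≤ ∫ x, f x ∂ν - ∫ x, f x ∂μ + ε := by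
  obtain ⟨G, hG, hcount, hsub⟩ := exists_measurable_epsSubgradient hconv hf.continuous hε
  have hGnorm (x) : ‖G x‖ ≤ 1 := norm_le_of_mem_epsSubdifferential hf (hsub x)
  have hρ := Measure.isProbabilityMeasure_map (μ := μ) hG.aemeasurable
  have hρball : (μ.map G) (closedBall 0 1)ᶜ = 0 := by
    rw [Measure.map_apply hG isClosed_closedBall.measurableSet.compl]
    simp [Set.preimage, hGnorm]
  have hfμ : Integrable f μ := integrable_of_lipschitzWith hf hμ
  have hinner : Integrable (fun x ↦ ⟪x, G x⟫) μ :=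
    integrable_inner_of_ae_norm_le hμ (by fun_prop) (ae_of_all _ hGnorm)
  have hdual : OTcost ν (μ.map G) ≤ ∫ x, f x ∂ν + ∫ y, convexConjugate f y ∂(μ.map G) := by
    refine OTcost_le_integral_add_integral hν
      (ae_norm_le_of_measure_compl_closedBall_eq_zero hρball) (integrable_of_lipschitzWith hf hν)
      (integrable_convexConjugate_map hf.continuous hfμ hG hinner hsub) ?_
    filter_upwards [ae_map_mem_range G hcount.measurableSet μ]
    rintro _ ⟨x, rfl⟩ z
    exact inner_le_add_convexConjugate (hsub x) z
  have hprimal := integral_inner_le_OTcost_map hG hGnorm hμ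
  have hconj := integral_convexConjugate_map_le hf.continuous hfμ hG hinner hsub
  exact ⟨μ.map G, hρ, hρball, by linarith⟩

theorem exists_dual_le_OTcost_add [IsProbabilityMeasure α] [IsProbabilityMeasure β]
    (hα : Integrable (fun x ↦ ‖x‖) α) {K : NNReal}
    (hβ : ∀ᵐ y ∂β, ‖y‖ ≤ K) (hε : 0 < ε) :
    ∃ f ψ : EuclideanSpace ℝ (Fin d) → ℝ, ConvexOn ℝ Set.univ f ∧ LipschitzWith K f ∧
      Integrable ψ β ∧ (∀ᵐ y ∂β, ∀ x, ⟪x, y⟫ ≤ f x + ε * ‖x‖ + ψ y) ∧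
      ∫ x, f x ∂α + ∫ y, ψ y ∂β ≤ OTcost α β + ε * (1 + ∫ x, ‖x‖ ∂α) := by
  have hball : ∀ᵐ y ∂β, y ∈ closedBall 0 (K : ℝ) := by
    simpa only [mem_closedBall_zero_iff] using hβ
  obtain ⟨s, T, hs, hT, hcell, hdist⟩ := exists_measurable_finite_quantization
    (isCompact_closedBall 0 (K : ℝ)).totallyBounded hball hε
  have hne : Nonempty s := hdist.exists.elim fun y _ ↦ ⟨T y⟩
  have hsK (z : s) : ‖(z : EuclideanSpace ℝ (Fin d))‖ ≤ K := mem_closedBall_zero_iff.1 (hs z.2)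
  obtain ⟨f, ψ, hconv, hlip, hdual, π, hfst, hsnd, hle⟩ :=
    exists_dual_le_integral_add_of_finite hT (fun z ↦ (measureReal_ne_zero_iff).2 (hcell z)) hsK
      hα hε
  have hπ : π ∈ Couplings α β := ⟨hfst.map_eq, hsnd.map_eq⟩
  refine ⟨f, fun y ↦ ψ (T y), hconv, hlip, Integrable.of_finite.comp_measurable hT, ?_, ?_⟩
  · filter_upwards [hdist] with y hy x
    linarith [hdual x (T y), inner_le_inner_add_mul_norm ((dist_comm _ _).trans_le hy.le) x]
  have hround := integral_inner_le_integral_inner_add (hfst.integrable_comp_of_integrable hα)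
    (integrable_inner_snd_of_measurePreserving hT hsK hα hfst)
    (integrable_inner_of_mem_couplings hπ hα hβ)
    (hsnd.quasiMeasurePreserving.ae (hdist.mono fun _ ↦ le_of_lt))
  rw [integral_comp_of_measurePreserving hfst hα.1] at hround
  linarith [integral_inner_le_OTcost hπ hα hβ]

theorem exists_integral_sub_le_OTcost_sub {ρ : Measure (EuclideanSpace ℝ (Fin d))}
    [IsProbabilityMeasure ρ] (hμ : Integrable (fun x ↦ ‖x‖) μ) (hν : Integrable (fun x ↦ ‖x‖) ν)
    {K : NNReal} (hρ : ∀ᵐ y ∂ρ, ‖y‖ ≤ K) (hε : 0 < ε) :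
    ∃ f : EuclideanSpace ℝ (Fin d) → ℝ, ConvexOn ℝ Set.univ f ∧ LipschitzWith K f ∧
      ∫ x, f x ∂ν - ∫ x, f x ∂μ ≤ OTcost ν ρ - OTcost μ ρ + ε := by
  have hM : 0 < 1 + ∫ x, ‖x‖ ∂ν + ∫ x, ‖x‖ ∂μ := by positivity
  set δ := ε / (1 + ∫ x, ‖x‖ ∂ν + ∫ x, ‖x‖ ∂μ)
  have hδ : δ * (1 + ∫ x, ‖x‖ ∂ν + ∫ x, ‖x‖ ∂μ) = ε := div_mul_cancel₀ ε hM.ne'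
  obtain ⟨f, ψ, hconv, hlip, hψ, hdual, hle⟩ :=
    exists_dual_le_OTcost_add hν hρ (div_pos hε hM)
  have hf := integrable_of_lipschitzWith hlip hμ
  have hweak := OTcost_le_integral_add_integral hμ hρ (hf.add (hμ.const_mul δ)) hψ hdual
  rw [integral_add' hf (hμ.const_mul δ), integral_const_mul] at hweak
  exact ⟨f, hconv, hlip, by linarith⟩

end Euclidean

theorem stmt8_general {d : ℕ} (μ ν : Measure (EuclideanSpace ℝ (Fin d)))
    [IsProbabilityMeasure μ] [IsProbabilityMeasure ν]
    (hμ : Integrable (fun x => ‖x‖) μ) (hν : Integrable (fun y => ‖y‖) ν) :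
    sInf {r : ℝ | ∃ f : EuclideanSpace ℝ (Fin d) → ℝ,
        ConvexOn ℝ Set.univ f ∧ LipschitzWith 1 f ∧
        r = ∫ x, f x ∂ν - ∫ x, f x ∂μ}
      = sInf {r : ℝ | ∃ ρ : Measure (EuclideanSpace ℝ (Fin d)),
        IsProbabilityMeasure ρ ∧ ρ (closedBall (0 : EuclideanSpace ℝ (Fin d)) 1)ᶜ = 0 ∧
        r = OTcost ν ρ - OTcost μ ρ} := by
  refine le_antisymm
    (csInf_le_csInf_of_forall_exists_le_add ?_ ⟨_, Measure.dirac 0, inferInstance, by simp, rfl⟩ ?_)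
    (csInf_le_csInf_of_forall_exists_le_add ?_
      ⟨_, fun _ ↦ 0, convexOn_const 0 convex_univ, LipschitzWith.const' 0, rfl⟩ ?_)
  · refine ⟨-((1 : NNReal) * (∫ x, ‖x‖ ∂ν + ∫ x, ‖x‖ ∂μ)), ?_⟩
    rintro _ ⟨f, -, hf, rfl⟩
    exact neg_le_of_abs_le (abs_integral_sub_integral_le_of_lipschitzWith hf hν hμ)
  · rintro _ ⟨ρ, _, hρ, rfl⟩ ε hε
    obtain ⟨f, hconv, hf, hle⟩ := exists_integral_sub_le_OTcost_sub hμ hν (K := 1)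
      (ae_norm_le_of_measure_compl_closedBall_eq_zero hρ) hε
    exact ⟨_, ⟨f, hconv, hf, rfl⟩, hle⟩
  · refine ⟨-(1 * ∫ x, ‖x‖ ∂ν) - 1 * ∫ x, ‖x‖ ∂μ, ?_⟩
    rintro _ ⟨ρ, _, hρ, rfl⟩
    have hnorm := ae_norm_le_of_measure_compl_closedBall_eq_zero hρ
    exact sub_le_sub (neg_le_of_abs_le (abs_OTcost_le hν hnorm))
      (le_of_abs_le (abs_OTcost_le hμ hnorm))
  · rintro _ ⟨f, hconv, hf, rfl⟩ ε hε
    obtain ⟨ρ, hprob, hρ, hle⟩ := exists_OTcost_sub_le_integral_sub hμ hν hconv hf hε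
    exact ⟨_, ⟨ρ, hprob, hρ, rfl⟩, hle⟩

theorem stmt8 (d : ℕ) (hd : 1 ≤ d)
    (μ ν : Measure (EuclideanSpace ℝ (Fin d)))
    [IsProbabilityMeasure μ] [IsProbabilityMeasure ν]
    (hμ : Integrable (fun x => ‖x‖) μ) (hν : Integrable (fun y => ‖y‖) ν)
    (hmuleb : μ ≪ (volume : Measure (EuclideanSpace ℝ (Fin d))))
    (hlebmu : (volume : Measure (EuclideanSpace ℝ (Fin d))) ≪ μ)
    (hnuleb : ν ≪ (volume : Measure (EuclideanSpace ℝ (Fin d))))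
    (hlebnu : (volume : Measure (EuclideanSpace ℝ (Fin d))) ≪ ν) :
    sInf {r : ℝ | ∃ f : EuclideanSpace ℝ (Fin d) → ℝ,
        ConvexOn ℝ Set.univ f ∧ LipschitzWith 1 f ∧
        r = ∫ x, f x ∂ν - ∫ x, f x ∂μ}
      = sInf {r : ℝ | ∃ ρ : Measure (EuclideanSpace ℝ (Fin d)),
        IsProbabilityMeasure ρ ∧ ρ (closedBall (0 : EuclideanSpace ℝ (Fin d)) 1)ᶜ = 0 ∧
        r = OTcost ν ρ - OTcost μ ρ} :=
  stmt8_general μ ν hμ hν
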